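/- arXiv:2312.04776 — 2 statements merged into one kernel-verified Lean document; each statement's English description precedes it below -/
import Mathlib

section
/- Let m₁, m₂ be distinct nonzero real numbers with m₁ ≠ 1 and m₂ ≠ 1. Then the function ε ↦ λ(ε) on ℝ ∖ {0} attains its maximum, and its set of maximizers is exactly { +√|m₂(m₁ − 1)/(m₁(m₂ − 1))|, −√|m₂(m₁ − 1)/(m₁(m₂ − 1))| }. -/
/-!
With `K = |m₂(m₁ - 1)/(m₁(m₂ - 1))| > 0`, the product of the two denominators of `λ(ε)` is, by
completing the square, `M + q (ε² - K)²/ε²` with `q = (m₁(m₂ - 1))² > 0` and a constant `M > 0`.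
The numerator is a positive constant, so `λ` is largest exactly where the square vanishes, that is
where `ε² = K`.
-/

/-- For distinct nonzero `m₁, m₂` with `m₁ ≠ 1 ≠ m₂`, the function
`ε ↦ λ(ε) = [(m₂ - m₁)²/((m₁ - 1)² + ε²(m₂ - 1)²)] · [(m₁ m₂)²/(m₁² + m₂²/ε²)]` on `ℝ \ {0}`
attains its maximum, and its set of maximizers is exactly
`{√|m₂(m₁ - 1)/(m₁(m₂ - 1))|, -√|m₂(m₁ - 1)/(m₁(m₂ - 1))|}`. -/
theorem stmt_7 (m₁ m₂ : ℝ) (hm : m₁ ≠ m₂) (h₁0 : m₁ ≠ 0) (h₂0 : m₂ ≠ 0)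
    (h₁1 : m₁ ≠ 1) (h₂1 : m₂ ≠ 1)
    (lam : ℝ → ℝ)
    (hlam : lam = fun ε : ℝ =>
      ((m₂ - m₁) ^ 2 / ((m₁ - 1) ^ 2 + ε ^ 2 * (m₂ - 1) ^ 2)) *
        ((m₁ * m₂) ^ 2 / (m₁ ^ 2 + m₂ ^ 2 / ε ^ 2))) :
    {ε : ℝ | ε ≠ 0 ∧ ∀ t : ℝ, t ≠ 0 → lam t ≤ lam ε} =
      {Real.sqrt |m₂ * (m₁ - 1) / (m₁ * (m₂ - 1))|,
        -Real.sqrt |m₂ * (m₁ - 1) / (m₁ * (m₂ - 1))|} := by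
  have ha : m₁ - 1 ≠ 0 := sub_ne_zero.mpr h₁1
  have hb : m₂ - 1 ≠ 0 := sub_ne_zero.mpr h₂1
  have hd : m₂ - m₁ ≠ 0 := sub_ne_zero.mpr hm.symm
  set K : ℝ := |m₂ * (m₁ - 1) / (m₁ * (m₂ - 1))| with hK
  have hKpos : 0 < K := by
    rw [hK]; positivity
  have hq : 0 < (m₁ * (m₂ - 1)) ^ 2 := by positivity
  have hKsq : (m₁ * (m₂ - 1)) ^ 2 * K ^ 2 = (m₂ * (m₁ - 1)) ^ 2 := by
    rw [hK, sq_abs]; field_simp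
  obtain ⟨M, hM⟩ : ∃ M, M = ((m₁ - 1) * m₁) ^ 2 + ((m₂ - 1) * m₂) ^ 2
      + 2 * (m₁ * (m₂ - 1)) ^ 2 * K := ⟨_, rfl⟩
  have hMpos : 0 < M := by rw [hM]; positivity
  obtain ⟨N, hN⟩ : ∃ N, N = (m₂ - m₁) ^ 2 * (m₁ * m₂) ^ 2 := ⟨_, rfl⟩
  have hNpos : 0 < N := by rw [hN]; positivity
  have key : ∀ ε : ℝ, ε ≠ 0 →
      lam ε = N / (M + (m₁ * (m₂ - 1)) ^ 2 * ((ε ^ 2 - K) ^ 2 / ε ^ 2)) := by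
    intro ε hε
    have hden : ((m₁ - 1) ^ 2 + ε ^ 2 * (m₂ - 1) ^ 2) * (m₁ ^ 2 + m₂ ^ 2 / ε ^ 2)
        = M + (m₁ * (m₂ - 1)) ^ 2 * ((ε ^ 2 - K) ^ 2 / ε ^ 2) := by
      rw [hM]
      field_simp
      linear_combination -hKsq
    rw [hlam]
    simp only
    rw [div_mul_div_comm, hden, hN]
  have hs : √K ^ 2 = K := Real.sq_sqrt hKpos.le
  have hs0 : √K ≠ 0 := (Real.sqrt_pos.mpr hKpos).ne'
  have hmem : ∀ ε : ℝ, (ε = √K ∨ ε = -√K) ↔ ε ^ 2 = K := by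
    intro ε
    rw [← sq_eq_sq_iff_eq_or_eq_neg, hs]
  ext ε
  simp only [Set.mem_setOf_eq, Set.mem_insert_iff, Set.mem_singleton_iff]
  rw [hmem]
  constructor
  · rintro ⟨hε, hmax⟩
    have h := hmax (√K) hs0
    rw [key _ hs0, key _ hε, hs, sub_self, div_le_div_iff_of_pos_left hNpos
      (by positivity) (by positivity)] at h
    by_contra hne
    have hne' : ε ^ 2 - K ≠ 0 := sub_ne_zero.mpr hne
    have : 0 < (m₁ * (m₂ - 1)) ^ 2 * ((ε ^ 2 - K) ^ 2 / ε ^ 2) := by positivity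
    norm_num at h
    linarith
  · intro hε
    have hε0 : ε ≠ 0 := by
      rintro rfl
      norm_num at hε
      exact hKpos.ne hε
    refine ⟨hε0, fun t ht => ?_⟩
    rw [key _ ht, key _ hε0, hε, sub_self, div_le_div_iff_of_pos_left hNpos
      (by positivity) (by positivity)]
    have : 0 ≤ (m₁ * (m₂ - 1)) ^ 2 * ((t ^ 2 - K) ^ 2 / t ^ 2) := by positivity
    norm_num
    exact this
end

section
/- Let m₁, m₂ be distinct nonzero real numbers with m₁ ≠ 1 and m₂ ≠ 1. Then sup_{ε ∈ ℝ, ε ≠ 0} λ(ε) = ( m₁ m₂ (m₂ − m₁) / (|m₁(m₁ − 1)| + |m₂(m₂ − 1)|) )², and this supremum is attained. -/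
/-!
The product of the two denominators of `λ(ε)` is, by Lagrange's identity,
`(|m₁(m₁ - 1)| + |m₂(m₂ - 1)|)² + (ε |m₂ - 1| |m₁| - |m₁ - 1| |m₂| / ε)²`, while the numerator
`(m₁ m₂ (m₂ - m₁))²` does not depend on `ε`. Hence `λ(ε)` is largest exactly when the last square
vanishes, i.e. when `ε² = |m₁ - 1| |m₂| / (|m₂ - 1| |m₁|)`.
-/

/-- Lagrange's identity for the product of the two denominators of `λ(ε)`. -/
lemma denom_eq (m₁ m₂ ε : ℝ) (hε : ε ≠ 0) :
    ((m₁ - 1) ^ 2 + ε ^ 2 * (m₂ - 1) ^ 2) * (m₁ ^ 2 + m₂ ^ 2 / ε ^ 2) =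
      (|m₁ * (m₁ - 1)| + |m₂ * (m₂ - 1)|) ^ 2 +
        (ε * |m₂ - 1| * |m₁| - |m₁ - 1| * |m₂| / ε) ^ 2 := by
  rw [abs_mul, abs_mul, ← sq_abs (m₁ - 1), ← sq_abs (m₂ - 1), ← sq_abs m₁, ← sq_abs m₂]
  field_simp
  ring

/-- For distinct nonzero `m₁, m₂` with `m₁ ≠ 1 ≠ m₂`,
`sup_{ε ≠ 0} λ(ε) = (m₁ m₂ (m₂ - m₁)/(|m₁(m₁ - 1)| + |m₂(m₂ - 1)|))²`, and this supremum is
attained (i.e. the value is the greatest element of the range of `λ` on `ℝ \ {0}`). -/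
theorem stmt_8 (m₁ m₂ : ℝ) (hm : m₁ ≠ m₂) (h₁0 : m₁ ≠ 0) (h₂0 : m₂ ≠ 0)
    (h₁1 : m₁ ≠ 1) (h₂1 : m₂ ≠ 1)
    (lam : ℝ → ℝ)
    (hlam : lam = fun ε : ℝ =>
      ((m₂ - m₁) ^ 2 / ((m₁ - 1) ^ 2 + ε ^ 2 * (m₂ - 1) ^ 2)) *
        ((m₁ * m₂) ^ 2 / (m₁ ^ 2 + m₂ ^ 2 / ε ^ 2))) :
    IsGreatest {x : ℝ | ∃ ε : ℝ, ε ≠ 0 ∧ lam ε = x}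
      ((m₁ * m₂ * (m₂ - m₁) / (|m₁ * (m₁ - 1)| + |m₂ * (m₂ - 1)|)) ^ 2) := by
  have hS : 0 < |m₁ * (m₁ - 1)| + |m₂ * (m₂ - 1)| := by
    have := abs_pos.2 (mul_ne_zero h₁0 (sub_ne_zero.2 h₁1))
    positivity
  have key : ∀ ε : ℝ, ε ≠ 0 → lam ε = (m₁ * m₂ * (m₂ - m₁)) ^ 2 /
      ((|m₁ * (m₁ - 1)| + |m₂ * (m₂ - 1)|) ^ 2 +
        (ε * |m₂ - 1| * |m₁| - |m₁ - 1| * |m₂| / ε) ^ 2) := by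
    intro ε hε
    simp only [hlam]
    rw [← denom_eq m₁ m₂ ε hε, div_mul_div_comm]
    congr 1
    ring
  rw [div_pow]
  constructor
  · have ha : 0 < |m₁ - 1| := abs_pos.2 (sub_ne_zero.2 h₁1)
    have hb : 0 < |m₂ - 1| := abs_pos.2 (sub_ne_zero.2 h₂1)
    have hm₁ : 0 < |m₁| := abs_pos.2 h₁0
    have hm₂ : 0 < |m₂| := abs_pos.2 h₂0
    have hq : 0 < |m₁ - 1| * |m₂| / (|m₂ - 1| * |m₁|) := by positivity
    obtain ⟨ε, hε, hsq⟩ : ∃ ε : ℝ, 0 < ε ∧ ε ^ 2 = |m₁ - 1| * |m₂| / (|m₂ - 1| * |m₁|) :=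
      ⟨_, Real.sqrt_pos.2 hq, Real.sq_sqrt hq.le⟩
    refine ⟨ε, hε.ne', ?_⟩
    have hz : ε * |m₂ - 1| * |m₁| - |m₁ - 1| * |m₂| / ε = 0 := by
      rw [eq_div_iff (by positivity)] at hsq
      rw [sub_eq_zero, eq_div_iff hε.ne', ← hsq]
      ring
    rw [key ε hε.ne', hz]
    simp
  · rintro x ⟨ε, hε, rfl⟩
    rw [key ε hε]
    exact div_le_div_of_nonneg_left (sq_nonneg _) (by positivity)
      (le_add_of_nonneg_right (sq_nonneg _))
end
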